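/- Let H and 𝔏 be nonzero complex Hilbert spaces, let R be an injective quasinormal bounded operator on H, and let A be an injective positive bounded operator on 𝔏. If it is not the case that both m_{|R|} is an eigenvalue of |R| and ‖A‖ is an eigenvalue of A, then Λ_int(R, A⊗S) = {λ ∈ ℂ : |λ| > m_{|R|}/‖A‖}. -/

import Mathlib

open ContinuousLinearMap

noncomputable section

/-- The modulus `|T| = (T*T)^(1/2)` of a bounded operator on a complex Hilbert space. -/
def modulus {H : Type*} [NormedAddCommGroup H] [InnerProductSpace ℂ H] [CompleteSpace H]
    (T : H →L[ℂ] H) : H →L[ℂ] H :=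
  CFC.sqrt (adjoint T ∘L T)

/-- A bounded operator is quasinormal if it commutes with its modulus. -/
def IsQuasinormal {H : Type*} [NormedAddCommGroup H] [InnerProductSpace ℂ H] [CompleteSpace H]
    (T : H →L[ℂ] H) : Prop :=
  T ∘L modulus T = modulus T ∘L T

/-- `m_T = inf {⟨Tx,x⟩ : ‖x‖ = 1}` (real part of the inner product). -/
def mval {H : Type*} [NormedAddCommGroup H] [InnerProductSpace ℂ H]
    (T : H →L[ℂ] H) : ℝ :=
  sInf {r : ℝ | ∃ x : H, ‖x‖ = 1 ∧ r = T.reApplyInnerSelf x}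

/-- The set of intertwining values `Λ_int(R,M)`. -/
def intertwiningValues {H K : Type*} [NormedAddCommGroup H] [InnerProductSpace ℂ H]
    [NormedAddCommGroup K] [InnerProductSpace ℂ K]
    (R : H →L[ℂ] H) (M : K →L[ℂ] K) : Set ℂ :=
  {l : ℂ | ∃ X : K →L[ℂ] H, X ≠ 0 ∧ R ∘L X = l • (X ∘L M)}

/-- The set of extended eigenvalues `σ_ext(T)`. -/
def extSpectrum {H : Type*} [NormedAddCommGroup H] [InnerProductSpace ℂ H]
    (T : H →L[ℂ] H) : Set ℂ :=
  {l : ℂ | ∃ X : H →L[ℂ] H, X ≠ 0 ∧ T ∘L X = l • (X ∘L T)}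

/-- The set `𝒜_r(R,A)` of operators `L` with `‖Rⁿ(Lx)‖ ≤ c·rⁿ·‖Aⁿx‖` for all `n, x`. -/
def calA {H 𝔏 : Type*} [NormedAddCommGroup H] [InnerProductSpace ℂ H]
    [NormedAddCommGroup 𝔏] [InnerProductSpace ℂ 𝔏]
    (r : ℝ) (R : H →L[ℂ] H) (A : 𝔏 →L[ℂ] 𝔏) : Set (𝔏 →L[ℂ] H) :=
  {L : 𝔏 →L[ℂ] H | ∃ c : ℝ, 0 ≤ c ∧
    ∀ (n : ℕ) (x : 𝔏), ‖(R ^ n) (L x)‖ ≤ c * r ^ n * ‖(A ^ n) x‖}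

/-- An operator is pure if it has no nonzero reducing subspace on which it is normal. -/
def IsPure {H : Type*} [NormedAddCommGroup H] [InnerProductSpace ℂ H] [CompleteSpace H]
    (T : H →L[ℂ] H) : Prop :=
  ∀ M : Submodule ℂ H, IsClosed (M : Set H) → (∀ x ∈ M, T x ∈ M) →
    (∀ x ∈ M, adjoint T x ∈ M) →
    (∀ x ∈ M, T (adjoint T x) = adjoint T (T x)) → M = ⊥

universe u

/-- An operator is subnormal if it has a normal extension on a larger Hilbert space. -/
def IsSubnormal {F : Type*} [NormedAddCommGroup F] [InnerProductSpace ℂ F] [CompleteSpace F]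
    (T : F →L[ℂ] F) : Prop :=
  ∃ (K : Type u) (_ : NormedAddCommGroup K) (_ : InnerProductSpace ℂ K) (_ : CompleteSpace K)
    (j : F →ₗᵢ[ℂ] K) (M : K →L[ℂ] K),
      adjoint M ∘L M = M ∘L adjoint M ∧ ∀ x : F, M (j x) = j (T x)

end

/-!
Write `P = |R|` and `m = m_P`. Quasinormality gives `‖Rⁿx‖ = ‖Pⁿx‖`, so orbit norms of `R` may be
computed with the positive operator `P`.

If `RX = λX(A ⊗ S)` with `X ≠ 0`, then `λ ≠ 0`, and the zeroth column `L` of `X` is nonzero: if the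
`n`-th column vanishes, the next one vanishes on `ran A` by the intertwining relation and on `ker A`
by injectivity of `R`. Moreover `‖PⁿLx‖ ≤ ‖X‖ |λ|ⁿ ‖Aⁿx‖`. Suppose `|λ| ≤ m / ‖A‖` and `Lx ≠ 0`.
Then `‖(P/m)ⁿLx‖` is bounded. Squared norms along an orbit of a self-adjoint operator form a convex
sequence, so this bounded one decreases, while `P/m` does not decrease norms; hence `P/m` fixes `Lx`
and `m` is an eigenvalue of `P`. Then `‖A‖` is one of `A`, since otherwise the mean ergodic theorem
gives `(A/‖A‖)ⁿx → 0`.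

Conversely, if `|λ| > m / ‖A‖`, the functional calculus supplies `y ≠ 0` whose orbit `Pⁿy` grows at
a rate close to `m`, and a backward `A`-orbit `v₀ ≠ 0`, `Avₙ₊₁ = vₙ`, decaying at a rate close to
`1/‖A‖`. The operator `u ↦ ∑ λ⁻ⁿ ⟨vₙ, uₙ⟩ Rⁿy` then converges and intertwines.
-/

open Filter Topology InnerProductSpace

section NormedSpace

variable {𝕜 E : Type*} [NontriviallyNormedField 𝕜] [NormedAddCommGroup E] [NormedSpace 𝕜 E]
  {T : E →L[𝕜] E}

theorem norm_pow_apply_le_norm_pow_mul (T : E →L[𝕜] E) (n : ℕ) (x : E) :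
    ‖(T ^ n) x‖ ≤ ‖T‖ ^ n * ‖x‖ := by
  induction n with
  | zero => simp
  | succ n ih =>
    rw [pow_succ', mul_apply_eq_comp, pow_succ', mul_assoc]
    exact T.le_opNorm_of_le ih

theorem antitone_norm_pow_apply (hT : ‖T‖ ≤ 1) (x : E) : Antitone fun n => ‖(T ^ n) x‖ :=
  antitone_nat_of_succ_le fun n => by
    simpa only [pow_succ', mul_apply_eq_comp, one_mul] using T.le_of_opNorm_le hT ((T ^ n) x)

theorem pow_apply_eq_pow_smul {c : 𝕜} {x : E} (hx : T x = c • x) (n : ℕ) :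
    (T ^ n) x = c ^ n • x := by
  induction n with
  | zero => simp
  | succ n ih => rw [pow_succ, mul_apply_eq_comp, hx, map_smul, ih, smul_smul, ← pow_succ']

theorem norm_ofReal_smul_pow_apply {𝕜 E : Type*} [RCLike 𝕜] [NormedAddCommGroup E]
    [NormedSpace 𝕜 E] {c : ℝ} (hc : 0 ≤ c) (T : E →L[𝕜] E) (n : ℕ) (x : E) :
    ‖(((c : 𝕜) • T) ^ n) x‖ = c ^ n * ‖(T ^ n) x‖ := by
  rw [smul_pow, smul_apply, norm_smul, norm_pow, RCLike.norm_of_nonneg hc]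

theorem exists_hasSum_apply_of_summable_norm {ι F : Type*} [NormedAddCommGroup F]
    [NormedSpace 𝕜 F] [CompleteSpace F] {U : ι → E →L[𝕜] F} (hU : Summable fun i => ‖U i‖) :
    ∃ X : E →L[𝕜] F, ∀ u, HasSum (fun i => U i u) (X u) := by
  obtain ⟨X, hX⟩ := hU.of_norm
  exact ⟨X, fun u => (ContinuousLinearMap.apply 𝕜 F u).hasSum hX⟩

end NormedSpace

section Orbits

theorem antitone_of_two_mul_le_of_bddAbove {s : ℕ → ℝ}
    (hconv : ∀ n, 2 * s (n + 1) ≤ s n + s (n + 2)) (hbdd : BddAbove (Set.range s)) :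
    Antitone s := by
  obtain ⟨M, hM⟩ := hbdd
  have hincr : Monotone fun n => s (n + 1) - s n :=
    monotone_nat_of_le_succ fun n => by linarith [hconv n]
  refine antitone_nat_of_succ_le fun n => ?_
  by_contra! hlt
  have hlinear (k : ℕ) : s n + k * (s (n + 1) - s n) ≤ s (n + k) := by
    induction k with
    | zero => simp
    | succ k ih =>
      have hk : s (n + 1) - s n ≤ s (n + k + 1) - s (n + k) := hincr (Nat.le_add_right n k)
      push_cast
      rw [← add_assoc n k 1]
      linarith
  obtain ⟨k, hk⟩ := exists_nat_gt ((M - s n) / (s (n + 1) - s n))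
  rw [div_lt_iff₀ (sub_pos.mpr hlt)] at hk
  linarith [hlinear k, hM ⟨n + k, rfl⟩]

variable {𝕜 E : Type*} [RCLike 𝕜] [NormedAddCommGroup E] [InnerProductSpace 𝕜 E] {T : E →L[𝕜] E}

theorem norm_pow_apply_sq_eq_re_inner (hT : T.IsSymmetric) (n : ℕ) (x : E) :
    ‖(T ^ n) x‖ ^ 2 = RCLike.re (inner 𝕜 (((T ^ 2) ^ n) x) x) := by
  have hsymm : inner 𝕜 ((T ^ n) ((T ^ n) x)) x = inner 𝕜 ((T ^ n) x) ((T ^ n) x) := by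
    have h := hT.pow n ((T ^ n) x) x
    rwa [← toLinearMap_pow] at h
  rw [← pow_mul, two_mul, pow_add, mul_apply_eq_comp, hsymm, inner_self_eq_norm_sq]

theorem norm_sq_sub_two_mul_norm_sq_add_norm_sq (hT : T.IsSymmetric) (x : E) :
    ‖(T ^ 2) x‖ ^ 2 - 2 * ‖T x‖ ^ 2 + ‖x‖ ^ 2 = ‖(T ^ 2) x - x‖ ^ 2 := by
  rw [norm_sub_sq (𝕜 := 𝕜)]
  have h := norm_pow_apply_sq_eq_re_inner hT 1 x
  simp only [pow_one] at h
  rw [h]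

theorem apply_eq_self_of_sq_apply_eq_self (hT : T.IsPositive) {x : E} (hx : (T ^ 2) x = x) :
    T x = x := by
  have hneg : T (x - T x) = -(x - T x) := by
    rw [map_sub, ← mul_apply_eq_comp, ← sq, hx, neg_sub]
  have h := hT.re_inner_nonneg_left (x - T x)
  rw [hneg, inner_neg_left, map_neg, inner_self_eq_norm_sq] at h
  have hzero : ‖x - T x‖ = 0 := by nlinarith [norm_nonneg (x - T x)]
  exact (sub_eq_zero.mp (norm_eq_zero.mp hzero)).symm

theorem antitone_norm_pow_apply_sq_of_bddAbove (hT : T.IsSymmetric) {x : E}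
    (hx : BddAbove (Set.range fun n => ‖(T ^ n) x‖ ^ 2)) :
    Antitone fun n => ‖(T ^ n) x‖ ^ 2 := by
  refine antitone_of_two_mul_le_of_bddAbove (fun n => ?_) hx
  have hdiff := norm_sq_sub_two_mul_norm_sq_add_norm_sq hT ((T ^ n) x)
  have hnonneg := hdiff.ge.trans' (sq_nonneg _)
  simp only [← mul_apply_eq_comp, ← pow_succ', ← pow_add, add_comm 2 n] at hnonneg
  linarith

theorem apply_eq_self_of_norm_pow_apply_le (hT : T.IsPositive) (hexp : ∀ z, ‖z‖ ≤ ‖T z‖)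
    {x : E} {K : ℝ} (hK : ∀ n, ‖(T ^ n) x‖ ≤ K) : T x = x := by
  have hanti : Antitone fun n => ‖(T ^ n) x‖ ^ 2 := by
    refine antitone_norm_pow_apply_sq_of_bddAbove hT.isSymmetric ⟨K ^ 2, ?_⟩
    rintro _ ⟨n, rfl⟩
    exact pow_le_pow_left₀ (norm_nonneg _) (hK n) 2
  have hle : ‖(T ^ 2) x‖ ^ 2 ≤ ‖T x‖ ^ 2 := by simpa only [pow_one] using hanti one_le_two
  have hge : ‖x‖ ^ 2 ≤ ‖T x‖ ^ 2 := pow_le_pow_left₀ (norm_nonneg _) (hexp x) 2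
  have hdiff := norm_sq_sub_two_mul_norm_sq_add_norm_sq hT.isSymmetric x
  have hzero : ‖(T ^ 2) x - x‖ = 0 := pow_eq_zero_iff two_ne_zero |>.mp <|
    le_antisymm (by linarith) (sq_nonneg _)
  exact apply_eq_self_of_sq_apply_eq_self hT (sub_eq_zero.mp (norm_eq_zero.mp hzero))

theorem norm_pow_apply_sq_le_re_inner_birkhoffAverage (hT : T.IsSymmetric) (hnorm : ‖T‖ ≤ 1)
    (x : E) {N : ℕ} (hN : 0 < N) :
    ‖(T ^ N) x‖ ^ 2 ≤ RCLike.re (inner 𝕜 (birkhoffAverage 𝕜 ⇑(T ^ 2) _root_.id N x) x) := by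
  have havg : RCLike.re (inner 𝕜 (birkhoffAverage 𝕜 ⇑(T ^ 2) _root_.id N x) x) =
      (N : ℝ)⁻¹ * ∑ k ∈ Finset.range N, ‖(T ^ k) x‖ ^ 2 := by
    have hcast : ((N : 𝕜)⁻¹) = (((N : ℝ)⁻¹ : ℝ) : 𝕜) := by simp
    simp only [birkhoffAverage, birkhoffSum, id_eq, hcast, inner_smul_left, RCLike.conj_ofReal,
      RCLike.re_ofReal_mul, sum_inner, map_sum, norm_pow_apply_sq_eq_re_inner hT,
      ← pow_apply_eq_iterate]
  rw [havg, le_inv_mul_iff₀ (by positivity)]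
  have hsum := Finset.card_nsmul_le_sum (Finset.range N) (fun k => ‖(T ^ k) x‖ ^ 2)
    (‖(T ^ N) x‖ ^ 2) fun k hk => pow_le_pow_left₀ (norm_nonneg _)
      (antitone_norm_pow_apply hnorm x (Finset.mem_range.mp hk).le) 2
  simpa using hsum

theorem tendsto_norm_pow_apply_zero [CompleteSpace E] (hT : T.IsPositive) (hnorm : ‖T‖ ≤ 1)
    (hfix : ∀ z, T z = z → z = 0) (x : E) : Tendsto (fun n => ‖(T ^ n) x‖) atTop (𝓝 0) := by
  have hmean : Tendsto (birkhoffAverage 𝕜 ⇑(T ^ 2) _root_.id · x) atTop (𝓝 0) := by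
    have hsq_norm : ‖T ^ 2‖ ≤ 1 := by
      rw [sq]
      exact (norm_mul_le T T).trans (mul_le_one₀ hnorm (norm_nonneg T) hnorm)
    have h := (T ^ 2).tendsto_birkhoffAverage_orthogonalProjection hsq_norm x
    have hzero (z : (T ^ 2).eqLocus (1 : E →L[𝕜] E)) : (z : E) = 0 :=
      hfix z (apply_eq_self_of_sq_apply_eq_self hT z.2)
    rwa [hzero] at h
  have hsq : Tendsto (fun n => ‖(T ^ n) x‖ ^ 2) atTop (𝓝 0) := by
    refine squeeze_zero' (.of_forall fun n => sq_nonneg _)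
      ((eventually_gt_atTop 0).mono fun N hN =>
        norm_pow_apply_sq_le_re_inner_birkhoffAverage hT.isSymmetric hnorm x hN) ?_
    simpa only [inner_zero_left, map_zero, Function.comp_def] using
      (RCLike.continuous_re.tendsto _).comp (hmean.inner (𝕜 := 𝕜) (tendsto_const_nhds (x := x)))
  simpa using hsq.sqrt

theorem apply_eq_smul_of_norm_pow_apply_le_mul_pow (hT : T.IsPositive) {m : ℝ} (hm : 0 < m)
    (hbelow : ∀ z, m * ‖z‖ ≤ ‖T z‖) {x : E} {K : ℝ} (hK : ∀ n, ‖(T ^ n) x‖ ≤ K * m ^ n) :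
    T x = (m : 𝕜) • x := by
  have hm' : 0 ≤ m⁻¹ := inv_nonneg.mpr hm.le
  have hfix : (((m⁻¹ : ℝ) : 𝕜) • T) x = x := by
    refine apply_eq_self_of_norm_pow_apply_le (hT.smul_of_nonneg (RCLike.ofReal_nonneg.mpr hm'))
      (fun z => ?_) (K := K) fun n => ?_
    · rw [smul_apply, norm_smul, RCLike.norm_of_nonneg hm', le_inv_mul_iff₀ hm]
      exact hbelow z
    · rw [norm_ofReal_smul_pow_apply hm', inv_pow, inv_mul_le_iff₀ (pow_pos hm n), mul_comm]
      exact hK n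
  rwa [smul_apply, RCLike.ofReal_inv, inv_smul_eq_iff₀ (RCLike.ofReal_ne_zero.mpr hm.ne')] at hfix

theorem tendsto_inv_norm_pow_mul_norm_pow_apply [CompleteSpace E] (hT : T.IsPositive)
    (hT0 : T ≠ 0) (heig : ∀ z, T z = (‖T‖ : 𝕜) • z → z = 0) (x : E) :
    Tendsto (fun n => ‖T‖⁻¹ ^ n * ‖(T ^ n) x‖) atTop (𝓝 0) := by
  have hpos : 0 < ‖T‖ := norm_pos_iff.mpr hT0
  have hinv : 0 ≤ ‖T‖⁻¹ := inv_nonneg.mpr hpos.le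
  simp only [← norm_ofReal_smul_pow_apply (𝕜 := 𝕜) hinv]
  refine tendsto_norm_pow_apply_zero (hT.smul_of_nonneg (RCLike.ofReal_nonneg.mpr hinv))
    ?_ (fun z hz => heig z ?_) x
  · rw [norm_smul, RCLike.norm_of_nonneg hinv, inv_mul_cancel₀ hpos.ne']
  · rwa [smul_apply, RCLike.ofReal_inv,
      inv_smul_eq_iff₀ (RCLike.ofReal_ne_zero.mpr hpos.ne')] at hz

theorem eq_zero_of_comp_eq_zero_of_forall_ker [CompleteSpace E] {F : Type*}
    [NormedAddCommGroup F] [NormedSpace 𝕜 F] (hT : IsSelfAdjoint T) {L : E →L[𝕜] F}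
    (hrange : L ∘L T = 0) (hker : ∀ v, T v = 0 → L v = 0) : L = 0 := by
  have hrange_le : T.kerᗮ ≤ L.ker := by
    rw [orthogonal_ker, hT.adjoint_eq]
    refine Submodule.topologicalClosure_minimal _ ?_ L.isClosed_ker
    rintro _ ⟨z, rfl⟩
    exact DFunLike.congr_fun hrange z
  have htop : L.ker = ⊤ := by
    rw [eq_top_iff, ← T.ker.sup_orthogonal_of_hasOrthogonalProjection]
    exact sup_le hker hrange_le
  ext z
  exact htop.ge Submodule.mem_top

end Orbits

section LowerBound

variable {E : Type*} [NormedAddCommGroup E] [InnerProductSpace ℂ E]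

theorem mval_nonneg {T : E →L[ℂ] E} (hT : T.IsPositive) : 0 ≤ mval T := by
  apply Real.sInf_nonneg
  rintro _ ⟨x, -, rfl⟩
  exact hT.re_inner_nonneg_left x

theorem mval_le_reApplyInnerSelf (T : E →L[ℂ] E) {x : E} (hx : ‖x‖ = 1) :
    mval T ≤ T.reApplyInnerSelf x := by
  refine csInf_le ⟨-‖T‖, ?_⟩ ⟨x, hx, rfl⟩
  rintro _ ⟨z, hz, rfl⟩
  have h := (abs_le.mp (T.rayleighQuotient_le_norm z)).1
  rwa [rayleighQuotient, hz, one_pow, div_one] at h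

theorem mval_mul_norm_le_norm_apply (T : E →L[ℂ] E) (x : E) : mval T * ‖x‖ ≤ ‖T x‖ := by
  rcases eq_or_ne x 0 with rfl | hx
  · simp
  set u : E := ((‖x‖⁻¹ : ℝ) : ℂ) • x with hu
  have hx' : 0 < ‖x‖ := norm_pos_iff.mpr hx
  have hu1 : ‖u‖ = 1 := by
    rw [hu, norm_smul, Complex.norm_real, norm_inv, norm_norm, inv_mul_cancel₀ hx'.ne']
  have hTu : ‖T u‖ = ‖x‖⁻¹ * ‖T x‖ := by
    rw [hu, map_smul, norm_smul, Complex.norm_real, norm_inv, norm_norm]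
  have h : mval T ≤ ‖T u‖ := calc
    mval T ≤ T.reApplyInnerSelf u := mval_le_reApplyInnerSelf T hu1
    _ ≤ ‖T u‖ * ‖u‖ := re_inner_le_norm (𝕜 := ℂ) _ _
    _ = ‖T u‖ := by rw [hu1, mul_one]
  rwa [hTu, le_inv_mul_iff₀ hx', mul_comm] at h

theorem exists_mem_spectrum_lt_of_mval_lt [CompleteSpace E] [Nontrivial E] {T : E →L[ℂ] E}
    (hT : IsSelfAdjoint T) {b : ℝ} (hb : mval T < b) : ∃ t ∈ spectrum ℝ T, t < b := by
  by_contra! hspec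
  have hle : algebraMap ℝ (E →L[ℂ] E) b ≤ T := algebraMap_le_of_le_spectrum hspec hT
  obtain ⟨u, hu⟩ := exists_norm_eq E zero_le_one
  refine hb.not_ge (le_csInf ⟨_, u, hu, rfl⟩ ?_)
  rintro _ ⟨x, hx, rfl⟩
  have h := ((ContinuousLinearMap.le_def _ _).mp hle).re_inner_nonneg_left x
  have hbx : (algebraMap ℝ (E →L[ℂ] E) b) x = (b : ℂ) • x := by
    simp [Algebra.algebraMap_eq_smul_one]
  rw [sub_apply, inner_sub_left, map_sub, hbx, inner_smul_left, Complex.conj_ofReal,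
    inner_self_eq_norm_sq_to_K, hx] at h
  simpa [reApplyInnerSelf_apply] using h

end LowerBound

section FunctionalCalculus

variable {E : Type*} [NormedAddCommGroup E] [InnerProductSpace ℂ E] [CompleteSpace E]
  {T : E →L[ℂ] E}

theorem exists_cfc_apply_ne_zero (hT : IsSelfAdjoint T) {f : ℝ → ℝ} (hf : Continuous f) {t : ℝ}
    (ht : t ∈ spectrum ℝ T) (hft : f t ≠ 0) : ∃ z, cfc f T z ≠ 0 := by
  have hle := norm_apply_le_norm_cfc f T ht hf.continuousOn hT
  have hne : cfc f T ≠ 0 := norm_pos_iff.mp ((norm_pos_iff.mpr hft).trans_le hle)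
  exact DFunLike.ne_iff.mp hne

theorem exists_norm_pow_apply_le_of_mval_lt [Nontrivial E] (hT : T.IsPositive) {b : ℝ}
    (hb : mval T < b) : ∃ y ≠ 0, ∃ K, ∀ n : ℕ, ‖(T ^ n) y‖ ≤ K * b ^ n := by
  have hb0 : 0 ≤ b := (mval_nonneg hT).trans hb.le
  obtain ⟨t, ht, htb⟩ := exists_mem_spectrum_lt_of_mval_lt hT.isSelfAdjoint hb
  set f : ℝ → ℝ := fun s => max 0 (b - s)
  have hfc : Continuous f := by fun_prop
  obtain ⟨z, hz⟩ := exists_cfc_apply_ne_zero hT.isSelfAdjoint hfc ht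
    (lt_max_of_lt_right (sub_pos.mpr htb)).ne'
  refine ⟨cfc f T z, hz, b * ‖z‖, fun n => ?_⟩
  have hpow : T ^ n * cfc f T = cfc (fun s => s ^ n * f s) T := by
    rw [cfc_mul (fun s : ℝ => s ^ n) f T (by fun_prop) hfc.continuousOn,
      cfc_pow_id T n hT.isSelfAdjoint]
  have hnorm : ‖T ^ n * cfc f T‖ ≤ b ^ n * b := by
    rw [hpow]
    refine norm_cfc_le (by positivity) fun s hs => ?_
    have hs0 : 0 ≤ s := spectrum_nonneg_of_nonneg ((nonneg_iff_isPositive T).mpr hT) hs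
    rw [Real.norm_of_nonneg (by positivity)]
    rcases le_total s b with hsb | hsb
    · gcongr
      exact max_le hb0 (sub_le_self b hs0)
    · have hfs : f s = 0 := max_eq_left (sub_nonpos.mpr hsb)
      rw [hfs, mul_zero]
      positivity
  calc ‖(T ^ n) (cfc f T z)‖ ≤ b ^ n * b * ‖z‖ := (T ^ n * cfc f T).le_of_opNorm_le hnorm z
    _ = b * ‖z‖ * b ^ n := by ring

theorem exists_backward_orbit_of_lt_norm (hT : T.IsPositive) {d : ℝ} (hd0 : 0 < d)
    (hd : d < ‖T‖) : ∃ v : ℕ → E, v 0 ≠ 0 ∧ (∀ n, T (v (n + 1)) = v n) ∧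
      ∃ K, ∀ n, ‖v n‖ ≤ K * d⁻¹ ^ n := by
  have hnonneg : 0 ≤ T := (nonneg_iff_isPositive T).mpr hT
  have : Nontrivial (E →L[ℂ] E) := nontrivial_of_ne T 0 (norm_pos_iff.mp (hd0.trans hd))
  -- On `[d, ∞)`, where it is nonzero, `g n s` equals `(s - d) * s⁻¹ ^ n`.
  set g : ℕ → ℝ → ℝ := fun n s => max 0 (s - d) * (max s d)⁻¹ ^ n with hg
  have hmax (s : ℝ) : 0 < max s d := lt_max_of_lt_right hd0
  have hgc (n : ℕ) : Continuous (g n) := by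
    have hinv : Continuous fun s => (max s d)⁻¹ :=
      Continuous.inv₀ (by fun_prop) fun s => (hmax s).ne'
    fun_prop
  have hg_succ (n : ℕ) (s : ℝ) : s * g (n + 1) s = g n s := by
    rcases le_or_gt s d with hs | hs
    · simp [hg, max_eq_left (sub_nonpos.mpr hs)]
    · have hs0 : s ≠ 0 := (hd0.trans hs).ne'
      simp only [hg, max_eq_left hs.le, pow_succ]
      field_simp
  obtain ⟨z, hz⟩ := exists_cfc_apply_ne_zero hT.isSelfAdjoint (hgc 0)
    (CStarAlgebra.norm_mem_spectrum_of_nonneg hnonneg)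
    (by simpa only [hg, pow_zero, mul_one] using (lt_max_of_lt_right (sub_pos.mpr hd)).ne')
  refine ⟨fun n => cfc (g n) T z, hz, fun n => ?_, ‖T‖ * ‖z‖, fun n => ?_⟩
  · have hstep : T * cfc (g (n + 1)) T = cfc (g n) T := by
      rw [← funext (hg_succ n), cfc_mul (fun s : ℝ => s) (g (n + 1)) T (by fun_prop)
        (hgc _).continuousOn, cfc_id' ℝ T hT.isSelfAdjoint]
    exact DFunLike.congr_fun hstep z
  · have hnorm : ‖cfc (g n) T‖ ≤ ‖T‖ * d⁻¹ ^ n := by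
      refine norm_cfc_le (by positivity) fun s hs => ?_
      have hsT : s ≤ ‖T‖ := (le_abs_self s).trans (spectrum.norm_le_norm_of_mem hs)
      rw [Real.norm_of_nonneg
        (mul_nonneg (le_max_left _ _) (pow_nonneg (inv_nonneg.mpr (hmax s).le) n))]
      gcongr
      · exact max_le (norm_nonneg T) (by linarith)
      · exact le_max_right s d
    calc ‖cfc (g n) T z‖ ≤ ‖T‖ * d⁻¹ ^ n * ‖z‖ := le_of_opNorm_le _ hnorm z
      _ = ‖T‖ * ‖z‖ * d⁻¹ ^ n := by ring

end FunctionalCalculus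

section Modulus

variable {H : Type*} [NormedAddCommGroup H] [InnerProductSpace ℂ H] [CompleteSpace H]

theorem modulus_isPositive (R : H →L[ℂ] H) : (modulus R).IsPositive :=
  (nonneg_iff_isPositive _).mp (CFC.sqrt_nonneg _)

theorem norm_modulus_apply (R : H →L[ℂ] H) (x : H) : ‖modulus R x‖ = ‖R x‖ := by
  have hsq : modulus R * modulus R = adjoint R ∘L R := CFC.abs_mul_abs R
  have hadj : adjoint (modulus R) = modulus R := (modulus_isPositive R).isSelfAdjoint
  rw [← sq_eq_sq₀ (norm_nonneg _) (norm_nonneg _), apply_norm_sq_eq_inner_adjoint_left,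
    apply_norm_sq_eq_inner_adjoint_left, hadj, ← mul_def, hsq]

theorem IsQuasinormal.norm_modulus_pow_apply {R : H →L[ℂ] H} (hR : IsQuasinormal R) (n : ℕ)
    (x : H) : ‖(modulus R ^ n) x‖ = ‖(R ^ n) x‖ := by
  have hcomm : Commute R (modulus R) := hR
  induction n generalizing x with
  | zero => simp
  | succ n ih =>
    rw [pow_succ, mul_apply_eq_comp, ih, ← mul_apply_eq_comp, (hcomm.pow_left n).eq,
      mul_apply_eq_comp, norm_modulus_apply, ← mul_apply_eq_comp, ← pow_succ']

end Modulus

section TensorShift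

variable {H 𝔏 : Type*} [NormedAddCommGroup H] [InnerProductSpace ℂ H]
  [NormedAddCommGroup 𝔏] [InnerProductSpace ℂ 𝔏]

theorem IsQuasinormal.calA_modulus [CompleteSpace H] {R : H →L[ℂ] H} (hR : IsQuasinormal R)
    (r : ℝ) (A : 𝔏 →L[ℂ] 𝔏) : calA r (modulus R) A = calA r R A := by
  simp only [calA, hR.norm_modulus_pow_apply]

theorem mval_div_norm_lt_of_mem_calA [CompleteSpace 𝔏] {P : H →L[ℂ] H} (hP : P.IsPositive)
    {A : 𝔏 →L[ℂ] 𝔏} (hA : A.IsPositive) (hA0 : A ≠ 0)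
    (heig : ¬ ((∃ x : H, x ≠ 0 ∧ P x = (mval P : ℂ) • x) ∧
      (∃ v : 𝔏, v ≠ 0 ∧ A v = (‖A‖ : ℂ) • v)))
    {r : ℝ} (hr : 0 < r) {L : 𝔏 →L[ℂ] H} (hL : L ∈ calA r P A) (hL0 : L ≠ 0) :
    mval P / ‖A‖ < r := by
  obtain ⟨c, hc, hbound⟩ := hL
  obtain ⟨x, hx⟩ := DFunLike.ne_iff.mp hL0
  have hApos : 0 < ‖A‖ := norm_pos_iff.mpr hA0
  by_contra! hle
  have hm : 0 < mval P := (div_pos_iff_of_pos_right hApos).mp (hr.trans_le hle)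
  have hgrowth (n : ℕ) : ‖(P ^ n) (L x)‖ ≤ mval P ^ n * (c * (‖A‖⁻¹ ^ n * ‖(A ^ n) x‖)) := calc
    ‖(P ^ n) (L x)‖ ≤ c * r ^ n * ‖(A ^ n) x‖ := hbound n x
    _ ≤ c * (mval P / ‖A‖) ^ n * ‖(A ^ n) x‖ := by gcongr
    _ = mval P ^ n * (c * (‖A‖⁻¹ ^ n * ‖(A ^ n) x‖)) := by rw [div_eq_mul_inv, mul_pow]; ring
  have hPLx : P (L x) = (mval P : ℂ) • L x := by
    refine apply_eq_smul_of_norm_pow_apply_le_mul_pow hP hm (mval_mul_norm_le_norm_apply P)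
      (K := c * ‖x‖) fun n => (hgrowth n).trans ?_
    rw [mul_comm]
    gcongr
    rw [inv_pow, inv_mul_le_iff₀ (by positivity)]
    exact norm_pow_apply_le_norm_pow_mul A n x
  refine heig ⟨⟨L x, hx, hPLx⟩, ?_⟩
  by_contra! hno
  have hlim : Tendsto (fun n => c * (‖A‖⁻¹ ^ n * ‖(A ^ n) x‖)) atTop (𝓝 0) := by
    simpa using (tendsto_inv_norm_pow_mul_norm_pow_apply hA hA0
      (fun z hz => by_contra fun hz0 => hno z hz0 hz) x).const_mul c
  refine hx (norm_le_zero_iff.mp (ge_of_tendsto' hlim fun n => ?_))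
  have hPn : ‖(P ^ n) (L x)‖ = mval P ^ n * ‖L x‖ := by
    rw [pow_apply_eq_pow_smul hPLx, norm_smul, norm_pow, Complex.norm_of_nonneg hm.le]
  exact le_of_mul_le_mul_left (hPn ▸ hgrowth n) (pow_pos hm n)

/-- `AS` is the operator `A ⊗ S` on `ℓ²(ℕ, 𝔏)`, specified by its coordinates. -/
def IsTensorShift (A : 𝔏 →L[ℂ] 𝔏)
    (AS : lp (fun _ : ℕ => 𝔏) 2 →L[ℂ] lp (fun _ : ℕ => 𝔏) 2) : Prop :=
  ∀ x : lp (fun _ : ℕ => 𝔏) 2, (AS x) 0 = 0 ∧ ∀ n : ℕ, (AS x) (n + 1) = A (x n)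

theorem exists_apply_single_eq_of_summable_norm [CompleteSpace H] {T : ℕ → 𝔏 →L[ℂ] H}
    (hT : Summable fun n => ‖T n‖) :
    ∃ X : lp (fun _ : ℕ => 𝔏) 2 →L[ℂ] H, ∀ n x, X (lp.single 2 n x) = T n x := by
  obtain ⟨U, hUT⟩ : ∃ U : ℕ → lp (fun _ : ℕ => 𝔏) 2 →L[ℂ] H, ∀ n u, U n u = T n (u n) :=
    ⟨fun n => T n ∘L lp.evalCLM ℂ (fun _ : ℕ => 𝔏) 2 n, fun _ _ => rfl⟩
  have hUnorm (n : ℕ) : ‖U n‖ ≤ ‖T n‖ := by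
    refine opNorm_le_bound _ (norm_nonneg _) fun u => ?_
    rw [hUT]
    exact (T n).le_opNorm_of_le (lp.norm_apply_le_norm two_ne_zero u n)
  obtain ⟨X, hX⟩ := exists_hasSum_apply_of_summable_norm
    (hT.of_nonneg_of_le (fun n => norm_nonneg (U n)) hUnorm)
  refine ⟨X, fun n x => ?_⟩
  have hsingle : HasSum (fun k => U k (lp.single 2 n x)) (U n (lp.single 2 n x)) :=
    hasSum_single n fun k hk => by rw [hUT, lp.single_apply_ne _ _ _ hk, map_zero]
  rw [(hX _).unique hsingle, hUT, lp.single_apply_self]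

namespace IsTensorShift

variable {A : 𝔏 →L[ℂ] 𝔏} {AS : lp (fun _ : ℕ => 𝔏) 2 →L[ℂ] lp (fun _ : ℕ => 𝔏) 2}
  {R : H →L[ℂ] H} {X : lp (fun _ : ℕ => 𝔏) 2 →L[ℂ] H} {l : ℂ}

theorem apply_single (hAS : IsTensorShift A AS) (n : ℕ) (x : 𝔏) :
    AS (lp.single 2 n x) = lp.single 2 (n + 1) (A x) := by
  refine lp.ext (funext fun j => ?_)
  cases j with
  | zero => rw [(hAS _).1, lp.single_apply_ne _ _ _ n.succ_ne_zero.symm]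
  | succ j =>
    rw [(hAS _).2]
    rcases eq_or_ne j n with rfl | hj
    · rw [lp.single_apply_self, lp.single_apply_self]
    · rw [lp.single_apply_ne _ _ _ hj, lp.single_apply_ne _ _ _ (by simpa using hj), map_zero]

theorem intertwines_iff (hAS : IsTensorShift A AS) :
    R ∘L X = l • (X ∘L AS) ↔
      ∀ n x, R (X (lp.single 2 n x)) = l • X (lp.single 2 (n + 1) (A x)) := by
  constructor
  · intro h n x
    rw [← hAS.apply_single]
    exact DFunLike.congr_fun h (lp.single 2 n x)
  · intro h
    refine lp.ext_continuousLinearMap ENNReal.ofNat_ne_top fun n => ?_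
    ext x
    simpa [hAS.apply_single] using h n x

theorem pow_apply_single_zero (hAS : IsTensorShift A AS) (hX : R ∘L X = l • (X ∘L AS)) (n : ℕ)
    (x : 𝔏) : (R ^ n) (X (lp.single 2 0 x)) = l ^ n • X (lp.single 2 n ((A ^ n) x)) := by
  induction n with
  | zero => simp
  | succ n ih =>
    rw [pow_succ', mul_apply_eq_comp, ih, map_smul, hAS.intertwines_iff.mp hX, smul_smul,
      ← pow_succ, pow_succ' A, mul_apply_eq_comp]

theorem comp_single_zero_mem_calA (hAS : IsTensorShift A AS) (hX : R ∘L X = l • (X ∘L AS)) :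
    X ∘L lp.singleContinuousLinearMap ℂ (fun _ : ℕ => 𝔏) 2 0 ∈ calA ‖l‖ R A := by
  refine ⟨‖X‖, norm_nonneg X, fun n x => ?_⟩
  calc ‖(R ^ n) (X (lp.single 2 0 x))‖ = ‖l‖ ^ n * ‖X (lp.single 2 n ((A ^ n) x))‖ := by
        rw [hAS.pow_apply_single_zero hX, norm_smul, norm_pow]
    _ ≤ ‖l‖ ^ n * (‖X‖ * ‖(A ^ n) x‖) := by
        gcongr
        exact X.le_opNorm_of_le (lp.norm_single two_pos n _).le
    _ = ‖X‖ * ‖l‖ ^ n * ‖(A ^ n) x‖ := by ring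

theorem comp_single_zero_ne_zero [CompleteSpace 𝔏] (hAS : IsTensorShift A AS)
    (hA : IsSelfAdjoint A) (hR : Function.Injective R) (hl : l ≠ 0)
    (hX : R ∘L X = l • (X ∘L AS)) (hX0 : X ≠ 0) :
    X ∘L lp.singleContinuousLinearMap ℂ (fun _ : ℕ => 𝔏) 2 0 ≠ 0 := by
  intro hzero
  refine hX0 (lp.ext_continuousLinearMap ENNReal.ofNat_ne_top fun n => ?_)
  rw [zero_comp]
  have hrec := hAS.intertwines_iff.mp hX
  induction n with
  | zero => exact hzero
  | succ n ih =>
    refine eq_zero_of_comp_eq_zero_of_forall_ker hA ?_ fun v hv => hR ?_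
    · ext x
      have h : R (X (lp.single 2 n x)) = 0 := by
        rw [show X (lp.single 2 n x) = 0 from DFunLike.congr_fun ih x, map_zero]
      rw [hrec] at h
      exact (smul_eq_zero.mp h).resolve_left hl
    · simpa [hv] using hrec (n + 1) v

theorem mem_intertwiningValues_of_summable [CompleteSpace H] (hAS : IsTensorShift A AS)
    (hA : A.IsSymmetric) (hl : l ≠ 0) {y : H} (hy : y ≠ 0) {v : ℕ → 𝔏} (hv0 : v 0 ≠ 0)
    (hv : ∀ n, A (v (n + 1)) = v n)
    (hsum : Summable fun n => ‖l‖⁻¹ ^ n * (‖(R ^ n) y‖ * ‖v n‖)) :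
    l ∈ intertwiningValues R AS := by
  let T (n : ℕ) : 𝔏 →L[ℂ] H := l⁻¹ ^ n • rankOne ℂ ((R ^ n) y) (v n)
  obtain ⟨X, hX⟩ := exists_apply_single_eq_of_summable_norm (T := T)
    (by simpa only [T, norm_smul, norm_pow, norm_inv, norm_rankOne] using hsum)
  refine ⟨X, ?_, hAS.intertwines_iff.mpr fun n x => ?_⟩
  · rintro rfl
    have h : inner ℂ (v 0) (v 0) • y = 0 := by simpa [T, eq_comm] using hX 0 (v 0)
    exact (smul_ne_zero (inner_self_ne_zero.mpr hv0) hy) h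
  · have hinner : inner ℂ (v (n + 1)) (A x) = inner ℂ (v n) x := by
      rw [← hv n]
      exact (hA (v (n + 1)) x).symm
    rw [hX, hX]
    simp only [T, smul_apply, rankOne_apply, map_smul, hinner, pow_succ', mul_apply_eq_comp]
    rw [smul_smul l, mul_inv_cancel_left₀ hl]

theorem mem_intertwiningValues_of_lt_norm [CompleteSpace H] [CompleteSpace 𝔏] [Nontrivial H]
    (hAS : IsTensorShift A AS) (hR : IsQuasinormal R) (hA : A.IsPositive) (hA0 : A ≠ 0)
    (hl : mval (modulus R) / ‖A‖ < ‖l‖) : l ∈ intertwiningValues R AS := by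
  have hApos : 0 < ‖A‖ := norm_pos_iff.mpr hA0
  have hm : 0 ≤ mval (modulus R) := mval_nonneg (modulus_isPositive R)
  have hlpos : 0 < ‖l‖ := (div_nonneg hm hApos.le).trans_lt hl
  obtain ⟨b, hmb, hbl⟩ := exists_between ((div_lt_iff₀ hApos).mp hl)
  have hb : 0 < b := hm.trans_lt hmb
  obtain ⟨d, hbd, hdA⟩ := exists_between ((div_lt_iff₀' hlpos).mpr hbl)
  have hd : 0 < d := (div_pos hb hlpos).trans hbd
  obtain ⟨y, hy, K, hK⟩ := exists_norm_pow_apply_le_of_mval_lt (modulus_isPositive R) hmb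
  obtain ⟨v, hv0, hv, K', hK'⟩ := exists_backward_orbit_of_lt_norm hA hd hdA
  refine hAS.mem_intertwiningValues_of_summable hA.isSymmetric (norm_pos_iff.mp hlpos) hy hv0 hv ?_
  have hratio : b / ‖l‖ * d⁻¹ < 1 := by rwa [← div_eq_mul_inv, div_lt_one hd]
  refine .of_nonneg_of_le (fun n => by positivity) (fun n => ?_)
    ((summable_geometric_of_lt_one (by positivity) hratio).mul_left (K * K'))
  calc ‖l‖⁻¹ ^ n * (‖(R ^ n) y‖ * ‖v n‖) ≤ ‖l‖⁻¹ ^ n * ((K * b ^ n) * (K' * d⁻¹ ^ n)) := by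
        rw [← hR.norm_modulus_pow_apply]
        gcongr
        · exact (norm_nonneg _).trans (hK n)
        · exact hK n
        · exact hK' n
    _ = K * K' * (b / ‖l‖ * d⁻¹) ^ n := by rw [div_eq_mul_inv, mul_pow, mul_pow]; ring

end IsTensorShift

theorem zero_notMem_intertwiningValues {K : Type*} [NormedAddCommGroup K] [InnerProductSpace ℂ K]
    {R : H →L[ℂ] H} {M : K →L[ℂ] K} (hR : Function.Injective R) : 0 ∉ intertwiningValues R M := by
  rintro ⟨X, hX0, hX⟩
  refine hX0 (ContinuousLinearMap.ext fun u => hR ?_)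
  simpa using DFunLike.congr_fun hX u

end TensorShift

theorem intertwiningValues_eq_open_disc_compl_general
    {H 𝔏 : Type*} [NormedAddCommGroup H] [InnerProductSpace ℂ H] [CompleteSpace H]
    [NormedAddCommGroup 𝔏] [InnerProductSpace ℂ 𝔏] [CompleteSpace 𝔏] [Nontrivial H]
    (R : H →L[ℂ] H) (hRinj : Function.Injective R) (hRqn : IsQuasinormal R)
    (A : 𝔏 →L[ℂ] 𝔏) (hA0 : A ≠ 0) (hApos : A.IsPositive)
    (AS : lp (fun _ : ℕ => 𝔏) 2 →L[ℂ] lp (fun _ : ℕ => 𝔏) 2) (hAS : IsTensorShift A AS)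
    (heig : ¬ ((∃ x : H, x ≠ 0 ∧ modulus R x = (mval (modulus R) : ℂ) • x) ∧
      (∃ v : 𝔏, v ≠ 0 ∧ A v = (‖A‖ : ℂ) • v))) :
    intertwiningValues R AS = {l : ℂ | mval (modulus R) / ‖A‖ < ‖l‖} := by
  refine Set.Subset.antisymm ?_ fun l hl =>
    hAS.mem_intertwiningValues_of_lt_norm hRqn hApos hA0 hl
  rintro l ⟨X, hX0, hX⟩
  have hl : l ≠ 0 := by
    rintro rfl
    exact zero_notMem_intertwiningValues hRinj ⟨X, hX0, hX⟩
  refine mval_div_norm_lt_of_mem_calA (modulus_isPositive R) hApos hA0 heig (norm_pos_iff.mpr hl)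
    ?_ (hAS.comp_single_zero_ne_zero hApos.isSelfAdjoint hRinj hl hX hX0)
  rw [hRqn.calA_modulus]
  exact hAS.comp_single_zero_mem_calA hX

theorem intertwiningValues_eq_open_disc_compl
    {H 𝔏 : Type*} [NormedAddCommGroup H] [InnerProductSpace ℂ H] [CompleteSpace H] [NormedAddCommGroup 𝔏] [InnerProductSpace ℂ 𝔏] [CompleteSpace 𝔏] [Nontrivial H] [Nontrivial 𝔏]
    (R : H →L[ℂ] H) (hRinj : Function.Injective R) (hRqn : IsQuasinormal R)
    (A : 𝔏 →L[ℂ] 𝔏) (hAinj : Function.Injective A) (hApos : A.IsPositive)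
    (AS : lp (fun _ : ℕ => 𝔏) 2 →L[ℂ] lp (fun _ : ℕ => 𝔏) 2)
    (hAS : ∀ x : lp (fun _ : ℕ => 𝔏) 2,
      (AS x) 0 = 0 ∧ ∀ n : ℕ, (AS x) (n + 1) = A (x n))
    (heig : ¬ ((∃ x : H, x ≠ 0 ∧ modulus R x = (mval (modulus R) : ℂ) • x) ∧
      (∃ v : 𝔏, v ≠ 0 ∧ A v = (‖A‖ : ℂ) • v))) :
    intertwiningValues R AS = {l : ℂ | mval (modulus R) / ‖A‖ < ‖l‖} := by
  have hA0 : A ≠ 0 := by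
    rintro rfl
    exact Function.not_injective_const hAinj
  exact intertwiningValues_eq_open_disc_compl_general R hRinj hRqn A hA0 hApos AS hAS heig
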